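/- arXiv:0706.0707 — 2 statements merged into one kernel-verified Lean document; each statement's English description precedes it below -/
import Mathlib

section
/- Let F and G be two mutually orthogonal Legendrian foliations on a contact metric manifold (M,φ,ξ,η,g). Then for all vector fields X, X' tangent to F, the Pang invariants satisfy Π_F(X,X') − Π_G(φX,φX') = 4 g(hX,X'). -/
/-!
On sections `v, w` of `ker η` the contact condition `dη = Φ` reads
`η([v,w]) = -2 g(v, φ w)` (`eta_bracket`), and `ξ` preserves `ker η`
(`eta_bracket_xi`). Hence `Π(x,x') = 2 g(x', φ[x,ξ])` for all horizontal `x, x'`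
(`pang_eq`). Applied to `φ x, φ x'`, the compatibility of `g` with `φ` turns this into
`2 g(x', [φ x, ξ])`, so the difference of the two Pang invariants is
`2 g(x', [ξ, φ x] - φ[ξ, x]) = 4 g(h x, x')`.

The model does not assume that `g` is nondegenerate or that `C` is reduced, so the
identity `φ ξ = 0` is derived from the contact condition: `φ² ξ = 0` forces
`φ ξ` to be a multiple of `ξ`, with coefficient `η(φ ξ) = Φ(ξ,ξ) = dη(ξ,ξ) = 0`.
-/

/-!  An algebraic (Koszul / Lie–Rinehart style) model of an (almost) contact
metric manifold `(M, φ, ξ, η, g)`.  Here `C` plays the role of the commutative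
`ℝ`-algebra `C^∞(M)` of smooth functions on the manifold and `V` plays the role
of the `C`-module `Γ(TM)` of smooth vector fields, equipped with the Lie
bracket `bracket`, the derivation `act` of vector fields on functions, the
Riemannian metric `g`, the structure tensor `φ`, the `1`-form `η` and the Reeb
vector field `ξ`.  Real constants are regarded as functions via
`algebraMap ℝ C`. -/

noncomputable section

universe u v

structure AlmostContactMetric (C : Type u) (V : Type v)
    [CommRing C] [Algebra ℝ C] [AddCommGroup V] [Module C V] where
  /-- the derivative of a function along a vector field -/
  act : V → C → C
  /-- the Lie bracket of vector fields -/
  bracket : V → V → V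
  /-- the Riemannian metric -/
  g : V → V → C
  /-- the structure `(1,1)`-tensor `φ` -/
  phi : V → V
  /-- the `1`-form `η` -/
  eta : V → C
  /-- the Reeb vector field `ξ` -/
  xi : V
  act_add : ∀ u : V, ∀ f₁ f₂ : C, act u (f₁ + f₂) = act u f₁ + act u f₂
  act_mul : ∀ u : V, ∀ f₁ f₂ : C, act u (f₁ * f₂) = act u f₁ * f₂ + f₁ * act u f₂
  act_algebraMap : ∀ u : V, ∀ r : ℝ, act u (algebraMap ℝ C r) = 0
  act_add_left : ∀ u v : V, ∀ f : C, act (u + v) f = act u f + act v f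
  act_smul_left : ∀ f' : C, ∀ u : V, ∀ f : C, act (f' • u) f = f' * act u f
  bracket_add_left : ∀ u v w : V, bracket (u + v) w = bracket u w + bracket v w
  bracket_antisymm : ∀ v w : V, bracket v w = - bracket w v
  bracket_jacobi : ∀ u v w : V,
    bracket u (bracket v w) + bracket v (bracket w u) + bracket w (bracket u v) = 0
  bracket_leibniz : ∀ v : V, ∀ f : C, ∀ w : V,
    bracket v (f • w) = act v f • w + f • bracket v w
  bracket_act : ∀ v w : V, ∀ f : C,
    act (bracket v w) f = act v (act w f) - act w (act v f)
  g_add_left : ∀ u v w : V, g (u + v) w = g u w + g v w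
  g_smul_left : ∀ f : C, ∀ v w : V, g (f • v) w = f * g v w
  g_symm : ∀ v w : V, g v w = g w v
  phi_add : ∀ v w : V, phi (v + w) = phi v + phi w
  phi_smul : ∀ f : C, ∀ v : V, phi (f • v) = f • phi v
  eta_add : ∀ v w : V, eta (v + w) = eta v + eta w
  eta_smul : ∀ f : C, ∀ v : V, eta (f • v) = f * eta v
  eta_xi : eta xi = 1
  phi_sq : ∀ v : V, phi (phi v) = - v + eta v • xi
  g_compat : ∀ v w : V, g (phi v) (phi w) = g v w - eta v * eta w
  eta_eq_g_xi : ∀ v : V, eta v = g v xi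

namespace AlmostContactMetric

variable {C : Type u} {V : Type v} [CommRing C] [Algebra ℝ C]
  [AddCommGroup V] [Module C V]

/-- The fundamental 2-form `Φ(v,w) = g(v, φ w)`. -/
def Phi2 (S : AlmostContactMetric C V) (v w : V) : C := S.g v (S.phi w)

/-- The exterior derivative of `η`, with the convention
`dη(v,w) = ½ (v(η(w)) - w(η(v)) - η([v,w]))`. -/
def dEta (S : AlmostContactMetric C V) (v w : V) : C :=
  algebraMap ℝ C (1 / 2) *
    (S.act v (S.eta w) - S.act w (S.eta v) - S.eta (S.bracket v w))

/-- The tensor field `h = ½ 𝓛_ξ φ`. -/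
def h (S : AlmostContactMetric C V) (v : V) : V :=
  algebraMap ℝ C (1 / 2) • (S.bracket S.xi (S.phi v) - S.phi (S.bracket S.xi v))

/-- The contact metric condition `dη = Φ`. -/
def IsContactMetric (S : AlmostContactMetric C V) : Prop :=
  ∀ v w : V, S.dEta v w = S.Phi2 v w

/-- `ξ` is a Killing vector field: `𝓛_ξ g = 0`. -/
def KillingXi (S : AlmostContactMetric C V) : Prop :=
  ∀ v w : V, S.act S.xi (S.g v w) =
    S.g (S.bracket S.xi v) w + S.g v (S.bracket S.xi w)

/-- K-contact: `h = 0` (for a contact metric structure this is equivalent to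
`ξ` being Killing). -/
def IsKContact (S : AlmostContactMetric C V) : Prop := ∀ v : V, S.h v = 0

/-- `D` is the Levi-Civita connection of `g`. -/
structure IsLeviCivita (S : AlmostContactMetric C V) (D : V → V → V) : Prop where
  add_left : ∀ u v w : V, D (u + v) w = D u w + D v w
  smul_left : ∀ f : C, ∀ v w : V, D (f • v) w = f • D v w
  add_right : ∀ u v w : V, D u (v + w) = D u v + D u w
  leibniz : ∀ u : V, ∀ f : C, ∀ w : V, D u (f • w) = S.act u f • w + f • D u w
  torsion_free : ∀ v w : V, D v w - D w v = S.bracket v w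
  metric : ∀ u v w : V, S.act u (S.g v w) = S.g (D u v) w + S.g v (D u w)

/-- The curvature tensor of a connection:
`R(u,v)w = D_u D_v w - D_v D_u w - D_[u,v] w`. -/
def curv (S : AlmostContactMetric C V) (D : V → V → V) (u v w : V) : V :=
  D u (D v w) - D v (D u w) - D (S.bracket u v) w

/-- The `(κ,μ)`-nullity condition:
`R(v,w)ξ = κ(η(w)v - η(v)w) + μ(η(w)hv - η(v)hw)`. -/
def KappaMu (S : AlmostContactMetric C V) (D : V → V → V) (κ μ : ℝ) : Prop :=
  ∀ v w : V, S.curv D v w S.xi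
    = algebraMap ℝ C κ • (S.eta w • v - S.eta v • w)
    + algebraMap ℝ C μ • (S.eta w • S.h v - S.eta v • S.h w)

/-- A Legendrian distribution: a subbundle of the contact distribution
`D = ker η` on whose sections `dη` vanishes. -/
structure IsLegendrian (S : AlmostContactMetric C V) (L : Submodule C V) : Prop where
  horizontal : ∀ x ∈ L, S.eta x = 0
  isotropic : ∀ x ∈ L, ∀ y ∈ L, S.dEta x y = 0

/-- Involutivity (integrability) of a distribution: it is tangent to a
foliation. -/
def Involutive (S : AlmostContactMetric C V) (L : Submodule C V) : Prop :=
  ∀ x ∈ L, ∀ y ∈ L, S.bracket x y ∈ L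

/-- The Pang invariant `Π(x,x') = -η([x',[x,ξ]])` of a Legendrian foliation. -/
def Pang (S : AlmostContactMetric C V) (x x' : V) : C :=
  - S.eta (S.bracket x' (S.bracket x S.xi))

/-- Flatness of a Legendrian foliation in Pang's classification: `Π ≡ 0`. -/
def Flat (S : AlmostContactMetric C V) (L : Submodule C V) : Prop :=
  ∀ x ∈ L, ∀ x' ∈ L, S.Pang x x' = 0

/-- Non-degeneracy of a Legendrian foliation in Pang's classification:
the bilinear form `Π` has trivial kernel. -/
def Nondegenerate (S : AlmostContactMetric C V) (L : Submodule C V) : Prop :=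
  ∀ x ∈ L, (∀ x' ∈ L, S.Pang x x' = 0) → x = 0

/-- Degeneracy of a Legendrian foliation in Pang's classification:
the bilinear form `Π` has a nontrivial kernel. -/
def Degenerate (S : AlmostContactMetric C V) (L : Submodule C V) : Prop :=
  ∃ x ∈ L, x ≠ 0 ∧ ∀ x' ∈ L, S.Pang x x' = 0

/-- `L` is the eigendistribution of `h` inside the contact distribution
`ker η` for the eigenvalue `lam`. -/
def IsEigenDistrib (S : AlmostContactMetric C V) (lam : ℝ) (L : Submodule C V) : Prop :=
  ∀ v : V, v ∈ L ↔ (S.eta v = 0 ∧ S.h v = algebraMap ℝ C lam • v)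

/-- An orthogonal bi-Legendrian structure: a pair of mutually orthogonal,
conjugate (`Q = φ L`), complementary Legendrian distributions, together with
the projections of `TM = L ⊕ Q ⊕ ℝξ` onto `L` and onto `Q`. -/
structure OrthBiLegendrian (S : AlmostContactMetric C V) where
  L : Submodule C V
  Q : Submodule C V
  legL : S.IsLegendrian L
  legQ : S.IsLegendrian Q
  orth : ∀ x ∈ L, ∀ y ∈ Q, S.g x y = 0
  conjLQ : ∀ x ∈ L, S.phi x ∈ Q
  conjQL : ∀ y ∈ Q, S.phi y ∈ L
  pL : V → V
  pQ : V → V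
  pL_mem : ∀ v : V, pL v ∈ L
  pQ_mem : ∀ v : V, pQ v ∈ Q
  decomp : ∀ v : V, v = pL v + pQ v + S.eta v • S.xi
  pL_add : ∀ v w : V, pL (v + w) = pL v + pL w
  pL_smul : ∀ f : C, ∀ v : V, pL (f • v) = f • pL v
  pQ_add : ∀ v w : V, pQ (v + w) = pQ v + pQ w
  pQ_smul : ∀ f : C, ∀ v : V, pQ (f • v) = f • pQ v
  pL_of_memL : ∀ x ∈ L, pL x = x
  pL_of_memQ : ∀ y ∈ Q, pL y = 0
  pL_xi : pL S.xi = 0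
  pQ_of_memQ : ∀ y ∈ Q, pQ y = y
  pQ_of_memL : ∀ x ∈ L, pQ x = 0
  pQ_xi : pQ S.xi = 0

/-- Both distributions of the bi-Legendrian structure are integrable, i.e. the
pair is a pair of (mutually orthogonal) Legendrian foliations. -/
def OrthBiLegendrian.IsFoliated {S : AlmostContactMetric C V}
    (B : S.OrthBiLegendrian) : Prop :=
  S.Involutive B.L ∧ S.Involutive B.Q

/-- `D` is the bi-Legendrian connection associated with the pair `(L, Q)`:
the unique linear connection preserving `L`, `Q` and `ℝξ`, parallelizing `dη`,
whose torsion satisfies `T(x,y) = 2 dη(x,y) ξ` for `x ∈ Γ(L)`, `y ∈ Γ(Q)` and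
`T(v,ξ) = [ξ, v_L]_Q + [ξ, v_Q]_L`. -/
structure IsBiLegendrianConn (S : AlmostContactMetric C V)
    (B : S.OrthBiLegendrian) (D : V → V → V) : Prop where
  add_left : ∀ u v w : V, D (u + v) w = D u w + D v w
  smul_left : ∀ f : C, ∀ v w : V, D (f • v) w = f • D v w
  add_right : ∀ u v w : V, D u (v + w) = D u v + D u w
  leibniz : ∀ u : V, ∀ f : C, ∀ w : V, D u (f • w) = S.act u f • w + f • D u w
  preserves_L : ∀ v : V, ∀ x ∈ B.L, D v x ∈ B.L
  preserves_Q : ∀ v : V, ∀ y ∈ B.Q, D v y ∈ B.Q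
  preserves_xi : ∀ v : V, ∃ f : C, D v S.xi = f • S.xi
  parallel_dEta : ∀ u v w : V,
    S.act u (S.dEta v w) = S.dEta (D u v) w + S.dEta v (D u w)
  torsion_mixed : ∀ x ∈ B.L, ∀ y ∈ B.Q,
    D x y - D y x - S.bracket x y = (2 * S.dEta x y) • S.xi
  torsion_xi : ∀ v : V, D v S.xi - D S.xi v - S.bracket v S.xi
    = B.pQ (S.bracket S.xi (B.pL v)) + B.pL (S.bracket S.xi (B.pQ v))

/-- `D φ = 0`. -/
def ParallelPhi (S : AlmostContactMetric C V) (D : V → V → V) : Prop :=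
  ∀ v w : V, D v (S.phi w) = S.phi (D v w)

/-- `D h = 0`. -/
def ParallelH (S : AlmostContactMetric C V) (D : V → V → V) : Prop :=
  ∀ v w : V, D v (S.h w) = S.h (D v w)

/-- `D g = 0`. -/
def ParallelG (S : AlmostContactMetric C V) (D : V → V → V) : Prop :=
  ∀ u v w : V, S.act u (S.g v w) = S.g (D u v) w + S.g v (D u w)

/-- `D η = 0`. -/
def ParallelEta (S : AlmostContactMetric C V) (D : V → V → V) : Prop :=
  ∀ v w : V, S.act v (S.eta w) = S.eta (D v w)

end AlmostContactMetric

open AlmostContactMetric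

variable {C : Type u} {V : Type v} [CommRing C] [Algebra ℝ C]
  [AddCommGroup V] [Module C V]

namespace AlmostContactMetric

theorem two_mul_half : (2 : C) * algebraMap ℝ C (1 / 2) = 1 := by
  rw [← map_ofNat (algebraMap ℝ C) 2, ← map_mul]
  norm_num

theorem phi_zero (S : AlmostContactMetric C V) : S.phi 0 = 0 := by
  simpa using S.phi_smul 0 0

theorem phi_neg (S : AlmostContactMetric C V) (v : V) : S.phi (-v) = -S.phi v := by
  simpa using S.phi_smul (-1) v

theorem eta_neg (S : AlmostContactMetric C V) (v : V) : S.eta (-v) = -S.eta v := by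
  simpa using S.eta_smul (-1) v

theorem act_zero (S : AlmostContactMetric C V) (v : V) : S.act v 0 = 0 := by
  simpa using S.act_algebraMap v 0

theorem act_one (S : AlmostContactMetric C V) (v : V) : S.act v 1 = 0 := by
  simpa using S.act_algebraMap v 1

theorem g_zero_right (S : AlmostContactMetric C V) (v : V) : S.g v 0 = 0 := by
  rw [S.g_symm]
  simpa using S.g_smul_left 0 0 v

theorem g_neg_left (S : AlmostContactMetric C V) (v w : V) :
    S.g (-v) w = -S.g v w := by
  simpa using S.g_smul_left (-1) v w

theorem two_mul_dEta (S : AlmostContactMetric C V) (v w : V) :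
    2 * S.dEta v w = S.act v (S.eta w) - S.act w (S.eta v) - S.eta (S.bracket v w) := by
  rw [dEta, ← mul_assoc, two_mul_half, one_mul]

/-- The contact condition with the factor `½` cleared. -/
theorem IsContactMetric.two_mul_g_phi {S : AlmostContactMetric C V}
    (hS : S.IsContactMetric) (v w : V) :
    2 * S.g v (S.phi w) =
      S.act v (S.eta w) - S.act w (S.eta v) - S.eta (S.bracket v w) := by
  rw [← two_mul_dEta, hS v w, Phi2]

theorem IsContactMetric.phi_xi {S : AlmostContactMetric C V}
    (hS : S.IsContactMetric) : S.phi S.xi = 0 := by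
  have hsq : S.phi (S.phi S.xi) = 0 := by simp [S.phi_sq, S.eta_xi]
  have hpar := S.phi_sq (S.phi S.xi)
  rw [hsq, S.phi_zero] at hpar
  have heta : S.eta (S.phi S.xi) = 0 := by
    -- `dη(ξ,ξ)` is antisymmetric, and `2` is invertible in the `ℝ`-algebra `C`
    have h1 := hS.two_mul_g_phi S.xi S.xi
    have h2 := congrArg S.eta (S.bracket_antisymm S.xi S.xi)
    rw [S.eta_neg] at h2
    rw [S.eta_eq_g_xi, S.g_symm]
    linear_combination algebraMap ℝ C (1 / 2) * h1 - algebraMap ℝ C (1 / 2) ^ 2 * h2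
      + (algebraMap ℝ C (1 / 2) * S.eta (S.bracket S.xi S.xi)
        - S.g S.xi (S.phi S.xi)) * two_mul_half (C := C)
  rw [heta, zero_smul, add_zero] at hpar
  exact neg_eq_zero.mp hpar.symm

theorem IsContactMetric.eta_bracket {S : AlmostContactMetric C V}
    (hS : S.IsContactMetric) {v w : V} (hv : S.eta v = 0) (hw : S.eta w = 0) :
    S.eta (S.bracket v w) = -(2 * S.g v (S.phi w)) := by
  rw [hS.two_mul_g_phi, hv, hw, S.act_zero, S.act_zero]
  ring

/-- The Reeb flow preserves the contact distribution `ker η`. -/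
theorem IsContactMetric.eta_bracket_xi {S : AlmostContactMetric C V}
    (hS : S.IsContactMetric) {v : V} (hv : S.eta v = 0) :
    S.eta (S.bracket v S.xi) = 0 := by
  have h := hS.two_mul_g_phi v S.xi
  rw [hS.phi_xi, S.g_zero_right, hv, S.eta_xi, S.act_zero, S.act_one] at h
  linear_combination h

/-- The Pang invariant in terms of the metric. -/
theorem IsContactMetric.pang_eq {S : AlmostContactMetric C V}
    (hS : S.IsContactMetric) {x x' : V} (hx : S.eta x = 0) (hx' : S.eta x' = 0) :
    S.Pang x x' = 2 * S.g x' (S.phi (S.bracket x S.xi)) := by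
  rw [Pang, hS.eta_bracket hx' (hS.eta_bracket_xi hx), neg_neg]

end AlmostContactMetric

/-- Lemma 2.6: for two mutually orthogonal Legendrian
foliations `F = B.L`, `G = B.Q` on a contact metric manifold and all vector
fields `x, x'` tangent to `F` one has
`Π_F(x,x') - Π_G(φx, φx') = 4 g(hx, x')`. -/
theorem pang_sub_pang_conj_eq_four_g_h
    (S : AlmostContactMetric C V) (hS : S.IsContactMetric)
    (B : S.OrthBiLegendrian) (hB : B.IsFoliated) :
    ∀ x ∈ B.L, ∀ x' ∈ B.L,
      S.Pang x x' - S.Pang (S.phi x) (S.phi x') = 4 * S.g (S.h x) x' := by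
  intro x hx x' hx'
  have ex := B.legL.horizontal x hx
  have ex' := B.legL.horizontal x' hx'
  have eφx := B.legQ.horizontal _ (B.conjLQ x hx)
  have eφx' := B.legQ.horizontal _ (B.conjLQ x' hx')
  rw [hS.pang_eq ex ex', hS.pang_eq eφx eφx', S.g_compat, ex', zero_mul, sub_zero,
    AlmostContactMetric.h, S.g_smul_left, sub_eq_add_neg (S.bracket S.xi (S.phi x)),
    S.g_add_left, S.g_neg_left, S.bracket_antisymm x S.xi,
    S.bracket_antisymm (S.phi x) S.xi, S.phi_neg, S.g_symm x', S.g_symm x',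
    S.g_neg_left, S.g_neg_left]
  linear_combination (-2 * (S.g (S.bracket S.xi (S.phi x)) x'
    - S.g (S.phi (S.bracket S.xi x)) x')) * two_mul_half (C := C)
end
end

section
/- Let (M,φ,ξ,η,g) be a non-K-contact contact metric (κ,μ)-space and let (φ̃,ξ̃,η̃,g̃) be the D-homothetic deformation of (φ,ξ,η,g) of constant a > 0. Then h̃ = (1/a)h, the eigendistributions of h̃ coincide with those of h (D_{λ̃} = D_λ and D_{−λ̃} = D_{−λ} with λ̃ = λ/a), and the Pang invariants of the associated Legendrian foliations are unchanged: Π_{F_{λ̃}} = Π_{F_λ} and Π_{F_{−λ̃}} = Π_{F_{−λ}}. -/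
/-!
A real constant `c` is killed by every vector field, so the bracket is homogeneous in `c` in both
arguments. Hence `h̃ = ½ 𝓛_{ξ/a} φ = (1/a) h` (`defH_eq`), and since multiplication by the nonzero
constant `a` is invertible, the eigenvalue equation `h̃ v = (r/a) v` on `ker η̃` is equivalent to
`h v = r v` on `ker η` for every real `r` (`defH_eigen_iff`). In the Pang invariant the factor `a`
of `η̃ = a η` cancels the factor `1/a` of `ξ̃ = (1/a) ξ`, for arbitrary arguments (`defPang_eq`).
-/

/-!  An algebraic (Koszul / Lie–Rinehart style) model of an (almost) contact
metric manifold `(M, φ, ξ, η, g)`.  Here `C` plays the role of the commutative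
`ℝ`-algebra `C^∞(M)` of smooth functions on the manifold and `V` plays the role
of the `C`-module `Γ(TM)` of smooth vector fields, equipped with the Lie
bracket `bracket`, the derivation `act` of vector fields on functions, the
Riemannian metric `g`, the structure tensor `φ`, the `1`-form `η` and the Reeb
vector field `ξ`.  Real constants are regarded as functions via
`algebraMap ℝ C`. -/

noncomputable section

universe u v

open AlmostContactMetric

variable {C : Type u} {V : Type v} [CommRing C] [Algebra ℝ C]
  [AddCommGroup V] [Module C V]


/-- The Reeb vector field `ξ̃ = (1/a) ξ` of the `D`-homothetic deformation of
constant `a`. -/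
def defXi (S : AlmostContactMetric C V) (a : ℝ) : V :=
  algebraMap ℝ C (1 / a) • S.xi

/-- The `1`-form `η̃ = a η` of the `D`-homothetic deformation of constant `a`. -/
def defEta (S : AlmostContactMetric C V) (a : ℝ) (v : V) : C :=
  algebraMap ℝ C a * S.eta v

/-- The tensor `h̃ = ½ 𝓛_{ξ̃} φ̃` of the `D`-homothetic deformation of constant
`a` (recall `φ̃ = φ`). -/
def defH (S : AlmostContactMetric C V) (a : ℝ) (v : V) : V :=
  algebraMap ℝ C (1 / 2) •
    (S.bracket (defXi S a) (S.phi v) - S.phi (S.bracket (defXi S a) v))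

/-- The Pang invariant `Π̃(x,x') = -η̃([x',[x,ξ̃]])` computed with the deformed
structure tensors. -/
def defPang (S : AlmostContactMetric C V) (a : ℝ) (x x' : V) : C :=
  - defEta S a (S.bracket x' (S.bracket x (defXi S a)))

theorem bracket_const_smul_right (S : AlmostContactMetric C V) (c : ℝ) (v w : V) :
    S.bracket v (algebraMap ℝ C c • w) = algebraMap ℝ C c • S.bracket v w := by
  rw [S.bracket_leibniz, S.act_algebraMap, zero_smul, zero_add]

theorem bracket_const_smul_left (S : AlmostContactMetric C V) (c : ℝ) (v w : V) :
    S.bracket (algebraMap ℝ C c • v) w = algebraMap ℝ C c • S.bracket v w := by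
  rw [S.bracket_antisymm, bracket_const_smul_right, S.bracket_antisymm w v, smul_neg, neg_neg]

theorem algebraMap_mul_one_div_cancel {a : ℝ} (ha : a ≠ 0) :
    algebraMap ℝ C a * algebraMap ℝ C (1 / a) = 1 := by
  rw [← map_mul, mul_one_div_cancel ha, map_one]

theorem defH_eq (S : AlmostContactMetric C V) (a : ℝ) (v : V) :
    defH S a v = algebraMap ℝ C (1 / a) • S.h v := by
  unfold defH defXi AlmostContactMetric.h
  rw [bracket_const_smul_left, bracket_const_smul_left, S.phi_smul, ← smul_sub, smul_comm]

theorem defEta_eq_zero_iff (S : AlmostContactMetric C V) {a : ℝ} (ha : a ≠ 0) (v : V) :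
    defEta S a v = 0 ↔ S.eta v = 0 := by
  have hu : IsUnit (algebraMap ℝ C a) :=
    IsUnit.of_mul_eq_one _ (algebraMap_mul_one_div_cancel ha)
  exact hu.mul_right_eq_zero

/-- On `ker η̃ = ker η`, the `r/a`-eigenvectors of `h̃` are the `r`-eigenvectors of `h`. -/
theorem defH_eigen_iff (S : AlmostContactMetric C V) {a : ℝ} (ha : a ≠ 0) (r : ℝ) (v : V) :
    (defEta S a v = 0 ∧ defH S a v = algebraMap ℝ C (r / a) • v) ↔
      (S.eta v = 0 ∧ S.h v = algebraMap ℝ C r • v) := by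
  have hu : IsUnit (algebraMap ℝ C (1 / a)) :=
    IsUnit.of_mul_eq_one _ ((mul_comm _ _).trans (algebraMap_mul_one_div_cancel ha))
  have hr : algebraMap ℝ C (r / a) = algebraMap ℝ C (1 / a) * algebraMap ℝ C r := by
    rw [← map_mul, one_div_mul_eq_div]
  rw [defEta_eq_zero_iff S ha, defH_eq, hr, mul_smul, hu.smul_left_cancel]

theorem defPang_eq (S : AlmostContactMetric C V) {a : ℝ} (ha : a ≠ 0) (x x' : V) :
    defPang S a x x' = S.Pang x x' := by
  unfold defPang defEta defXi AlmostContactMetric.Pang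
  rw [bracket_const_smul_right, bracket_const_smul_right, S.eta_smul, ← mul_assoc,
    algebraMap_mul_one_div_cancel ha, one_mul]

/-- under a `D`-homothetic deformation of constant `a > 0` of
a non-K-contact contact metric `(κ,μ)`-space one has `h̃ = (1/a) h`, the
eigendistributions of `h̃` (for the eigenvalues `±λ/a`, `λ = √(1-κ)`) coincide
with those of `h`, and the Pang invariants of the associated Legendrian
foliations are unchanged. -/
theorem dHomothetic_deformation_invariance
    (S : AlmostContactMetric C V) (hS : S.IsContactMetric)
    (Dlc : V → V → V) (hlc : S.IsLeviCivita Dlc)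
    (κ μ : ℝ) (hkm : S.KappaMu Dlc κ μ) (hnK : ¬ S.IsKContact)
    (a : ℝ) (ha : 0 < a) :
    (∀ v : V, defH S a v = algebraMap ℝ C (1 / a) • S.h v) ∧
    (∀ v : V,
      (defEta S a v = 0 ∧
        defH S a v = algebraMap ℝ C (Real.sqrt (1 - κ) / a) • v) ↔
      (S.eta v = 0 ∧ S.h v = algebraMap ℝ C (Real.sqrt (1 - κ)) • v)) ∧
    (∀ v : V,
      (defEta S a v = 0 ∧
        defH S a v = algebraMap ℝ C (-(Real.sqrt (1 - κ) / a)) • v) ↔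
      (S.eta v = 0 ∧ S.h v = algebraMap ℝ C (-Real.sqrt (1 - κ)) • v)) ∧
    (∀ x x' : V,
      (S.eta x = 0 ∧ S.h x = algebraMap ℝ C (Real.sqrt (1 - κ)) • x) →
      (S.eta x' = 0 ∧ S.h x' = algebraMap ℝ C (Real.sqrt (1 - κ)) • x') →
      defPang S a x x' = S.Pang x x') ∧
    (∀ y y' : V,
      (S.eta y = 0 ∧ S.h y = algebraMap ℝ C (-Real.sqrt (1 - κ)) • y) →
      (S.eta y' = 0 ∧ S.h y' = algebraMap ℝ C (-Real.sqrt (1 - κ)) • y') →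
      defPang S a y y' = S.Pang y y') := by
  have ha' : a ≠ 0 := ha.ne'
  refine ⟨defH_eq S a, defH_eigen_iff S ha' _, fun v => ?_,
    fun x x' _ _ => defPang_eq S ha' x x', fun y y' _ _ => defPang_eq S ha' y y'⟩
  rw [← neg_div]
  exact defH_eigen_iff S ha' _ v
end
end
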